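/- Let r ≥ 3 be an integer and p₀ ∈ (0,1). Then there exist functions ŵ, b̂, q̂, ŝ, t̂ defined on the whole nonnegative real line which solve the system of differential equations associated with (r,p₀), and they satisfy: (i) ŵ(x), b̂(x), q̂(x), ŝ(x), t̂(x) are positive for all x ≥ 0; and (ii) the integral ∫₀^∞ b̂(x) dx converges (is finite). -/

import Mathlib

open MeasureTheory ProbabilityTheory Filter Set

namespace InducedForest

/-- The functions `w, b, q, s, t` solve, on `[0,∞)`, the system of differential equations
associated with `(r, p₀)`, including the initial conditions. -/
def SystemODE (r : ℕ) (p₀ : ℝ) (w b q s t : ℝ → ℝ) : Prop :=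
  (∀ x : ℝ, 0 ≤ x → HasDerivWithinAt w (-(r : ℝ) * s x) (Ici 0) x) ∧
  (∀ x : ℝ, 0 ≤ x → HasDerivWithinAt b (-(b x) - r * t x + r * s x) (Ici 0) x) ∧
  (∀ x : ℝ, 0 ≤ x →
    HasDerivWithinAt q (-((2 * (r : ℝ) - 2) * q x * s x / w x)) (Ici 0) x) ∧
  (∀ x : ℝ, 0 ≤ x →
    HasDerivWithinAt s (-(s x) + ((r : ℝ) - 1) * q x * s x / w x
      - ((r : ℝ) - 1) * (s x) ^ 2 / w x
      - (r : ℝ) * ((r : ℝ) - 2) * s x * t x / (((r : ℝ) - 1) * b x)) (Ici 0) x) ∧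
  (∀ x : ℝ, 0 ≤ x →
    HasDerivWithinAt t (-(2 * t x) + 2 * ((r : ℝ) - 1) * (s x) ^ 2 / w x
      - 2 * (r : ℝ) * ((r : ℝ) - 2) * (t x) ^ 2 / (((r : ℝ) - 1) * b x)) (Ici 0) x) ∧
  w 0 = (1 - p₀) ^ (r + 1) ∧
  b 0 = r * p₀ * (1 - p₀) ^ r ∧
  q 0 = (1 - p₀) ^ (2 * r) ∧
  s 0 = ((r : ℝ) - 1) * p₀ * (1 - p₀) ^ (2 * r - 1) ∧
  t 0 = ((r : ℝ) - 1) ^ 2 * p₀ ^ 2 * (1 - p₀) ^ (2 * r - 2)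

/-!
Write `r = m + 2` and `κ = r (r - 2) / (r - 1)`. The quantities `s² / (q t)` and
`q ^ (m + 2) / w ^ (2 m + 2)` are constants of the motion, so the system reduces to three functions
`u`, `v`, `β`, which can be scaled so that these constants do not appear in the equations.

The energy `v - u + u ^ (m + 1)` decreases along solutions and is negative at time `0`, by
Bernoulli's inequality `(1 - p₀) ^ m (1 + m p₀) ≤ (1 - p₀²) ^ m < 1`. If `u` vanished, the energy
would be `v > 0`; hence `u` stays positive.

In the coordinates `(u, log v, log (v² / β))` the reduced system is smooth on the whole space, and
since `2 κ ≥ m + 2` its solutions are bounded on bounded time intervals, so they are global.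
Finally `b + w` has derivative `-b - r t ≤ -b`, which makes `b` integrable.
-/

section RealFunctions

theorem hasDerivWithinAt_Ici_of_Icc {E : Type*} [NormedAddCommGroup E] [NormedSpace ℝ E]
    {f : ℝ → E} {f' : E} {a b t : ℝ} (h : HasDerivWithinAt f f' (Icc a b) t)
    (ht : t ∈ Ico a b) : HasDerivWithinAt f f' (Ici t) t :=
  h.mono_of_mem_nhdsWithin
    (mem_of_superset (Icc_mem_nhdsGE ht.2) (Icc_subset_Icc_left ht.1))

theorem le_add_mul_of_hasDerivWithinAt_le {g g' : ℝ → ℝ} {a b C : ℝ}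
    (hg : ∀ t ∈ Icc a b, HasDerivWithinAt g (g' t) (Icc a b) t) (hC : ∀ t ∈ Icc a b, g' t ≤ C)
    {t : ℝ} (ht : t ∈ Icc a b) : g t ≤ g a + C * (t - a) := by
  have hline (x : ℝ) : HasDerivAt (fun y ↦ g a + C * (y - a)) C x := by
    simpa using (((hasDerivAt_id x).sub_const a).const_mul C).const_add (g a)
  exact image_le_of_deriv_right_le_deriv_boundary (fun x hx ↦ (hg x hx).continuousWithinAt)
    (fun x hx ↦ hasDerivWithinAt_Ici_of_Icc (hg x (Ico_subset_Icc_self hx)) hx) (by simp)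
    (fun x _ ↦ (hline x).continuousAt.continuousWithinAt)
    (fun x _ ↦ (hline x).hasDerivWithinAt) (fun x hx ↦ hC x (Ico_subset_Icc_self hx)) ht

theorem add_mul_le_of_le_hasDerivWithinAt {g g' : ℝ → ℝ} {a b C : ℝ}
    (hg : ∀ t ∈ Icc a b, HasDerivWithinAt g (g' t) (Icc a b) t) (hC : ∀ t ∈ Icc a b, C ≤ g' t)
    {t : ℝ} (ht : t ∈ Icc a b) : g a + C * (t - a) ≤ g t := by
  have := le_add_mul_of_hasDerivWithinAt_le (fun x hx ↦ (hg x hx).neg)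
    (fun x hx ↦ neg_le_neg (hC x hx)) ht
  simp only [Pi.neg_apply] at this
  linarith

theorem integrableOn_Ioi_of_le_hasDerivWithinAt {φ g g' : ℝ → ℝ} {a C : ℝ}
    (hφ : ContinuousOn φ (Ici a)) (hφ₀ : ∀ x, a ≤ x → 0 ≤ φ x)
    (hg : ∀ x, a ≤ x → HasDerivWithinAt g (g' x) (Ici a) x) (hφg : ∀ x, a ≤ x → φ x ≤ g' x)
    (hgC : ∀ x, a ≤ x → g x ≤ C) : IntegrableOn φ (Ioi a) := by
  have hint (b : ℝ) : IntegrableOn φ (Icc a b) :=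
    (hφ.mono Icc_subset_Ici_self).integrableOn_Icc
  have hcont : ContinuousOn g (Ici a) := fun x hx ↦ (hg x hx).continuousWithinAt
  refine integrableOn_Ioi_of_intervalIntegral_norm_bounded (C - g a) a (l := atTop) (b := id)
    (fun b ↦ (hint b).mono_set Ioc_subset_Icc_self) tendsto_id
    ((eventually_ge_atTop a).mono fun b hab ↦ ?_)
  calc
    ∫ x in a..b, ‖φ x‖ = ∫ x in a..b, φ x :=
      intervalIntegral.integral_congr fun x hx ↦
        Real.norm_of_nonneg (hφ₀ x (by simpa [hab] using hx.1))
    _ ≤ g b - g a :=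
      intervalIntegral.integral_le_sub_of_hasDeriv_right_of_le hab
        (hcont.mono Icc_subset_Ici_self)
        (fun x hx ↦ (hg x hx.1.le).mono fun y hy ↦ hx.1.le.trans (mem_Ioi.1 hy).le) (hint b)
        fun x hx ↦ hφg x hx.1.le
    _ ≤ C - g a := sub_le_sub_right (hgC b hab) _

theorem one_sub_pow_mul_one_add_mul_lt_one {n : ℕ} (hn : n ≠ 0) {p : ℝ} (hp : p ∈ Ioo 0 1) :
    (1 - p) ^ n * (1 + n * p) < 1 := by
  obtain ⟨hp₀, hp₁⟩ := hp
  calc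
    (1 - p) ^ n * (1 + n * p) ≤ (1 - p) ^ n * (1 + p) ^ n :=
      mul_le_mul_of_nonneg_left (one_add_mul_le_pow (by linarith) n)
        (pow_nonneg (by linarith) n)
    _ = (1 - p ^ 2) ^ n := by rw [← mul_pow]; ring
    _ < 1 := pow_lt_one₀ (by nlinarith) (by nlinarith) hn

end RealFunctions

section GlobalExistence

theorem exists_first_hitting_time {φ : ℝ → ℝ} {a b c : ℝ} (hab : a ≤ b)
    (hφ : ContinuousOn φ (Icc a b)) (ha : φ a ≤ c) (hb : c ≤ φ b) :
    ∃ τ ∈ Icc a b, φ τ = c ∧ ∀ x ∈ Icc a τ, φ x ≤ c := by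
  have hne : (Icc a b ∩ φ ⁻¹' {c}).Nonempty := intermediate_value_Icc hab hφ ⟨ha, hb⟩
  have hcompact : IsCompact (Icc a b ∩ φ ⁻¹' {c}) :=
    isCompact_Icc.of_isClosed_subset (hφ.preimage_isClosed_of_isClosed isClosed_Icc
      isClosed_singleton) inter_subset_left
  obtain ⟨τ, ⟨hτ, hφτ⟩, hleast⟩ := hcompact.exists_isLeast hne
  refine ⟨τ, hτ, hφτ, fun x hx ↦ not_lt.1 fun hlt ↦ ?_⟩
  have hxb : x ≤ b := hx.2.trans hτ.2
  obtain ⟨y, hy, hφy⟩ := intermediate_value_Icc hx.1 (hφ.mono (Icc_subset_Icc_right hxb))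
    ⟨ha, hlt.le⟩
  have hyτ : τ ≤ y := hleast ⟨⟨hy.1, hy.2.trans hxb⟩, hφy⟩
  have hyx : y = x := le_antisymm hy.2 (hx.2.trans hyτ)
  exact hlt.ne' (hyx ▸ hφy)

variable {E : Type*} [NormedAddCommGroup E] [NormedSpace ℝ E] {v : E → E}

theorem eqOn_Icc_of_isIntegralCurveOn {f g : ℝ → E} {a b : ℝ} (hv : LocallyLipschitz v)
    (hf : IsIntegralCurveOn f (fun _ ↦ v) (Icc a b))
    (hg : IsIntegralCurveOn g (fun _ ↦ v) (Icc a b)) (hfg : f a = g a) :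
    EqOn f g (Icc a b) := by
  have hcompact : IsCompact (f '' Icc a b ∪ g '' Icc a b) :=
    (isCompact_Icc.image_of_continuousOn hf.continuousOn).union
      (isCompact_Icc.image_of_continuousOn hg.continuousOn)
  obtain ⟨K, hK⟩ := hv.locallyLipschitzOn.exists_lipschitzOnWith_of_compact hcompact
  have right_deriv {h : ℝ → E} (hh : IsIntegralCurveOn h (fun _ ↦ v) (Icc a b)) :
      ∀ t ∈ Ico a b, HasDerivWithinAt h (v (h t)) (Ici t) t := fun t ht ↦
    hasDerivWithinAt_Ici_of_Icc (hh t (Ico_subset_Icc_self ht)) ht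
  exact ODE_solution_unique_of_mem_Icc_right (fun _ _ ↦ hK)
    hf.continuousOn (right_deriv hf)
    (fun t ht ↦ .inl (mem_image_of_mem f (Ico_subset_Icc_self ht)))
    hg.continuousOn (right_deriv hg)
    (fun t ht ↦ .inr (mem_image_of_mem g (Ico_subset_Icc_self ht))) hfg

theorem exists_isIntegralCurveOn_Icc_of_lipschitzWith [CompleteSpace E] {K : NNReal} {C : ℝ}
    (hv : LipschitzWith K v) (hC : ∀ x, ‖v x‖ ≤ C) (x₀ : E) {a b : ℝ} (hab : a ≤ b) :
    ∃ f : ℝ → E, f a = x₀ ∧ IsIntegralCurveOn f (fun _ ↦ v) (Icc a b) := by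
  have hPL : IsPicardLindelof (fun _ ↦ v) (⟨a, le_rfl, hab⟩ : Icc a b) x₀
      (C.toNNReal * (b - a).toNNReal) 0 C.toNNReal K :=
    .of_time_independent (fun x _ ↦ (hC x).trans (Real.le_coe_toNNReal C)) hv.lipschitzOnWith
      (by simp [hab])
  exact hPL.exists_eq_forall_mem_Icc_hasDerivWithinAt₀

theorem exists_isIntegralCurveOn_Ici_of_forall_nat (hv : LocallyLipschitz v) {x₀ : E}
    (h : ∀ n : ℕ, ∃ f : ℝ → E, f 0 = x₀ ∧ IsIntegralCurveOn f (fun _ ↦ v) (Icc 0 (n : ℝ))) :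
    ∃ f : ℝ → E, f 0 = x₀ ∧ IsIntegralCurveOn f (fun _ ↦ v) (Ici 0) := by
  choose f hf₀ hf using h
  have hglue (n : ℕ) : EqOn (fun t ↦ f ⌈t⌉₊ t) (f n) (Icc 0 (n : ℝ)) := fun t ht ↦ by
    have hn : (⌈t⌉₊ : ℝ) ≤ n := by exact_mod_cast Nat.ceil_le.2 ht.2
    exact eqOn_Icc_of_isIntegralCurveOn hv (hf _) ((hf n).mono (Icc_subset_Icc_right hn))
      ((hf₀ _).trans (hf₀ n).symm) ⟨ht.1, Nat.le_ceil t⟩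
  refine ⟨fun t ↦ f ⌈t⌉₊ t, by simp [hf₀], fun t ht ↦ ?_⟩
  obtain ⟨n, hn⟩ := exists_nat_gt t
  have htn : t ∈ Icc 0 (n : ℝ) := ⟨ht, hn.le⟩
  have hderiv := (hf n t htn).congr (hglue n) (hglue n htn)
  rw [← hglue n htn] at hderiv
  refine hderiv.mono_of_mem_nhdsWithin ?_
  rw [← Ici_inter_Iic]
  exact inter_mem self_mem_nhdsWithin (mem_nhdsWithin_of_mem_nhds (Iic_mem_nhds hn))

variable [FiniteDimensional ℝ E]

theorem exists_lipschitzWith_bounded_eqOn_closedBall (hv : ContDiff ℝ 1 v) (R : ℝ) :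
    ∃ (g : E → E) (K : NNReal) (C : ℝ),
      LipschitzWith K g ∧ (∀ x, ‖g x‖ ≤ C) ∧ EqOn g v (Metric.closedBall 0 R) := by
  let χ : ContDiffBump (0 : E) := ⟨max R 1, max R 1 + 1, by positivity, by linarith⟩
  have hsmooth : ContDiff ℝ 1 fun x ↦ χ x • v x := χ.contDiff.smul hv
  have hsupp : HasCompactSupport fun x ↦ χ x • v x := χ.hasCompactSupport.smul_right
  obtain ⟨K, hK⟩ := hsmooth.lipschitzWith_of_hasCompactSupport hsupp one_ne_zero
  obtain ⟨C, hC⟩ := hsupp.exists_bound_of_continuous hsmooth.continuous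
  refine ⟨_, K, C, hK, hC, fun x hx ↦ ?_⟩
  have hχ : χ x = 1 :=
    χ.one_of_mem_closedBall (Metric.closedBall_subset_closedBall (le_max_left R 1) hx)
  simp only [hχ, one_smul]

theorem exists_isIntegralCurveOn_Icc_of_isBounded (hv : ContDiff ℝ 1 v) {x₀ : E} {T : ℝ}
    (hT : 0 ≤ T) {S : Set E} (hS : Bornology.IsBounded S)
    (hmem : ∀ τ ∈ Icc 0 T, ∀ f : ℝ → E, f 0 = x₀ →
      IsIntegralCurveOn f (fun _ ↦ v) (Icc 0 τ) → f τ ∈ S) :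
    ∃ f : ℝ → E, f 0 = x₀ ∧ IsIntegralCurveOn f (fun _ ↦ v) (Icc 0 T) := by
  obtain ⟨R, hR⟩ := (hS.insert x₀).subset_ball 0
  obtain ⟨g, K, C, hgK, hgC, hgv⟩ := exists_lipschitzWith_bounded_eqOn_closedBall hv R
  obtain ⟨f, hf₀, hf⟩ := exists_isIntegralCurveOn_Icc_of_lipschitzWith hgK hgC x₀ hT
  have curve_of_norm_le {τ : ℝ} (hτ : τ ≤ T) (h : ∀ t ∈ Icc 0 τ, ‖f t‖ ≤ R) :
      IsIntegralCurveOn f (fun _ ↦ v) (Icc 0 τ) := fun t ht ↦ by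
    simpa only [hgv (mem_closedBall_zero_iff.2 (h t ht))] using
      hf.mono (Icc_subset_Icc_right hτ) t ht
  refine ⟨f, hf₀, curve_of_norm_le le_rfl fun t ht ↦ not_lt.1 fun hlt ↦ ?_⟩
  have hf₀R : ‖f 0‖ ≤ R := hf₀ ▸ (mem_ball_zero_iff.1 (hR (mem_insert x₀ S))).le
  obtain ⟨τ, hτ, hτR, hle⟩ := exists_first_hitting_time ht.1
    (hf.continuousOn.norm.mono (Icc_subset_Icc_right ht.2)) hf₀R hlt.le
  have hτT : τ ≤ T := hτ.2.trans ht.2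
  have hτS : f τ ∈ S := hmem τ ⟨hτ.1, hτT⟩ f hf₀ (curve_of_norm_le hτT hle)
  exact (mem_ball_zero_iff.1 (hR (mem_insert_of_mem x₀ hτS))).ne hτR

theorem exists_isIntegralCurveOn_Ici_of_isBounded (hv : ContDiff ℝ 1 v) {x₀ : E}
    (hbdd : ∀ T, 0 ≤ T → ∃ S : Set E, Bornology.IsBounded S ∧ ∀ τ ∈ Icc 0 T, ∀ f : ℝ → E,
      f 0 = x₀ → IsIntegralCurveOn f (fun _ ↦ v) (Icc 0 τ) → f τ ∈ S) :
    ∃ f : ℝ → E, f 0 = x₀ ∧ IsIntegralCurveOn f (fun _ ↦ v) (Ici 0) :=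
  exists_isIntegralCurveOn_Ici_of_forall_nat hv.locallyLipschitz fun n ↦
    let ⟨_, hS, hmem⟩ := hbdd n n.cast_nonneg
    exists_isIntegralCurveOn_Icc_of_isBounded hv n.cast_nonneg hS hmem

end GlobalExistence

section LogSystem

open Real

/-- The vector field of the reduced system (see `IsReducedSolution`) in the coordinates
`(u, log v, log (v² / β))`, in which it is smooth on all of `ℝ³`. -/
noncomputable def logField (m : ℕ) (κ : ℝ) (z : ℝ × ℝ × ℝ) : ℝ × ℝ × ℝ :=
  (-exp z.2.1,
    -1 + (m + 1) * z.1 ^ m - κ * exp z.2.2,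
    -1 + 2 * (m + 1) * z.1 ^ m - (m + 2) * z.1 ^ (m + 1) * exp (z.2.2 - z.2.1)
      - (2 * κ - (m + 2)) * exp z.2.2)

theorem contDiff_logField (m : ℕ) (κ : ℝ) : ContDiff ℝ 1 (logField m κ) := by
  unfold logField
  fun_prop

/-- `u`, `L` and `M` are the components of an integral curve of `logField m κ` on `I`. -/
structure IsLogSolution (m : ℕ) (κ : ℝ) (u L M : ℝ → ℝ) (I : Set ℝ) : Prop where
  hasDerivWithinAt_u : ∀ t ∈ I, HasDerivWithinAt u (-exp (L t)) I t
  hasDerivWithinAt_L : ∀ t ∈ I,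
    HasDerivWithinAt L (-1 + (m + 1) * u t ^ m - κ * exp (M t)) I t
  hasDerivWithinAt_M : ∀ t ∈ I,
    HasDerivWithinAt M (-1 + 2 * (m + 1) * u t ^ m
      - (m + 2) * u t ^ (m + 1) * exp (M t - L t) - (2 * κ - (m + 2)) * exp (M t)) I t

variable {m : ℕ} {κ : ℝ} {u L M : ℝ → ℝ} {I : Set ℝ} {T t : ℝ}

theorem isLogSolution_of_isIntegralCurveOn {f : ℝ → ℝ × ℝ × ℝ}
    (hf : IsIntegralCurveOn f (fun _ ↦ logField m κ) I) :
    IsLogSolution m κ (fun t ↦ (f t).1) (fun t ↦ (f t).2.1) (fun t ↦ (f t).2.2) I where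
  hasDerivWithinAt_u t ht :=
    (ContinuousLinearMap.fst ℝ ℝ (ℝ × ℝ)).hasFDerivAt.comp_hasDerivWithinAt t (hf t ht)
  hasDerivWithinAt_L t ht :=
    ((ContinuousLinearMap.fst ℝ ℝ ℝ).comp
      (ContinuousLinearMap.snd ℝ ℝ (ℝ × ℝ))).hasFDerivAt.comp_hasDerivWithinAt t (hf t ht)
  hasDerivWithinAt_M t ht :=
    ((ContinuousLinearMap.snd ℝ ℝ ℝ).comp
      (ContinuousLinearMap.snd ℝ ℝ (ℝ × ℝ))).hasFDerivAt.comp_hasDerivWithinAt t (hf t ht)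

namespace IsLogSolution

theorem mono {J : Set ℝ} (h : IsLogSolution m κ u L M I) (hJ : J ⊆ I) :
    IsLogSolution m κ u L M J where
  hasDerivWithinAt_u t ht := (h.hasDerivWithinAt_u t (hJ ht)).mono hJ
  hasDerivWithinAt_L t ht := (h.hasDerivWithinAt_L t (hJ ht)).mono hJ
  hasDerivWithinAt_M t ht := (h.hasDerivWithinAt_M t (hJ ht)).mono hJ

theorem u_le_u_zero (h : IsLogSolution m κ u L M (Icc 0 T)) (ht : t ∈ Icc 0 T) : u t ≤ u 0 := by
  simpa using le_add_mul_of_hasDerivWithinAt_le h.hasDerivWithinAt_u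
    (fun x _ ↦ neg_nonpos.2 (exp_nonneg (L x))) ht

theorem energy_le_energy_zero (hκ : 0 ≤ κ) (h : IsLogSolution m κ u L M (Icc 0 T))
    (ht : t ∈ Icc 0 T) :
    exp (L t) - u t + u t ^ (m + 1) ≤ exp (L 0) - u 0 + u 0 ^ (m + 1) := by
  have hderiv (x : ℝ) (hx : x ∈ Icc 0 T) :
      HasDerivWithinAt (fun y ↦ exp (L y) - u y + u y ^ (m + 1))
        (-(κ * exp (L x) * exp (M x))) (Icc 0 T) x := by
    have hu := h.hasDerivWithinAt_u x hx
    refine (((h.hasDerivWithinAt_L x hx).exp.fun_sub hu).fun_add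
      (hu.fun_pow (m + 1))).congr_deriv ?_
    push_cast [Nat.add_sub_cancel]
    ring
  simpa using le_add_mul_of_hasDerivWithinAt_le hderiv
    (fun x _ ↦ neg_nonpos.2 (by positivity)) ht

theorem u_pos (hκ : 0 ≤ κ) (h : IsLogSolution m κ u L M (Icc 0 T)) (hu₀ : 0 < u 0)
    (hE : exp (L 0) + u 0 ^ (m + 1) < u 0) (ht : t ∈ Icc 0 T) : 0 < u t := by
  by_contra! hneg
  have hcont : ContinuousOn u (Icc 0 t) := fun x hx ↦
    (h.hasDerivWithinAt_u x (Icc_subset_Icc_right ht.2 hx)).continuousWithinAt.mono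
      (Icc_subset_Icc_right ht.2)
  obtain ⟨τ, hτ, huτ⟩ := intermediate_value_Icc' ht.1 hcont ⟨hneg, hu₀.le⟩
  have henergy := h.energy_le_energy_zero hκ (Icc_subset_Icc_right ht.2 hτ)
  simp only [huτ, sub_zero, zero_pow m.succ_ne_zero, add_zero] at henergy
  linarith [exp_pos (L τ)]

theorem L_le_log (hκ : 0 ≤ κ) (h : IsLogSolution m κ u L M (Icc 0 T)) (hu₀ : 0 < u 0)
    (hE : exp (L 0) + u 0 ^ (m + 1) < u 0) (ht : t ∈ Icc 0 T) : L t ≤ log (u 0) := by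
  rw [le_log_iff_exp_le hu₀]
  have hpow : 0 < u t ^ (m + 1) := pow_pos (h.u_pos hκ hu₀ hE ht) _
  linarith [h.energy_le_energy_zero hκ ht, h.u_le_u_zero ht]

theorem M_le_add_mul (hκ : m + 2 ≤ 2 * κ) (h : IsLogSolution m κ u L M (Icc 0 T))
    (hu : ∀ x ∈ Icc 0 T, 0 ≤ u x) (ht : t ∈ Icc 0 T) :
    M t ≤ M 0 + 2 * (m + 1) * u 0 ^ m * t := by
  have hderiv_le (x : ℝ) (hx : x ∈ Icc 0 T) :
      -1 + 2 * (m + 1) * u x ^ m - (m + 2) * u x ^ (m + 1) * exp (M x - L x)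
        - (2 * κ - (m + 2)) * exp (M x) ≤ 2 * (m + 1) * u 0 ^ m := by
    have hpow : 2 * (m + 1) * u x ^ m ≤ 2 * (m + 1) * u 0 ^ m := by
      gcongr
      exacts [hu x hx, h.u_le_u_zero hx]
    have hcross : 0 ≤ (m + 2) * u x ^ (m + 1) * exp (M x - L x) :=
      mul_nonneg (mul_nonneg (by positivity) (pow_nonneg (hu x hx) _)) (exp_nonneg _)
    have hself : 0 ≤ (2 * κ - (m + 2)) * exp (M x) :=
      mul_nonneg (sub_nonneg.2 hκ) (exp_nonneg _)
    linarith
  simpa using le_add_mul_of_hasDerivWithinAt_le h.hasDerivWithinAt_M hderiv_le ht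

theorem sub_mul_le_L (hκ : 0 ≤ κ) (h : IsLogSolution m κ u L M (Icc 0 T)) {M₁ : ℝ}
    (hu : ∀ x ∈ Icc 0 T, 0 ≤ u x) (hM : ∀ x ∈ Icc 0 T, M x ≤ M₁) (ht : t ∈ Icc 0 T) :
    L 0 - (1 + κ * exp M₁) * t ≤ L t := by
  have le_deriv (x : ℝ) (hx : x ∈ Icc 0 T) :
      -(1 + κ * exp M₁) ≤ -1 + (m + 1) * u x ^ m - κ * exp (M x) := by
    have hpow : 0 ≤ (m + 1) * u x ^ m := mul_nonneg (by positivity) (pow_nonneg (hu x hx) _)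
    have hexp : κ * exp (M x) ≤ κ * exp M₁ := by gcongr; exact hM x hx
    linarith
  have := add_mul_le_of_le_hasDerivWithinAt h.hasDerivWithinAt_L le_deriv ht
  linarith

theorem sub_mul_le_M (hκ : m + 2 ≤ 2 * κ) (h : IsLogSolution m κ u L M (Icc 0 T)) {L₁ M₁ : ℝ}
    (hu : ∀ x ∈ Icc 0 T, 0 ≤ u x) (hM : ∀ x ∈ Icc 0 T, M x ≤ M₁)
    (hL : ∀ x ∈ Icc 0 T, L₁ ≤ L x) (ht : t ∈ Icc 0 T) :
    M 0 - (1 + (m + 2) * u 0 ^ (m + 1) * exp (M₁ - L₁) + (2 * κ - (m + 2)) * exp M₁) * t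
      ≤ M t := by
  have le_deriv (x : ℝ) (hx : x ∈ Icc 0 T) :
      -(1 + (m + 2) * u 0 ^ (m + 1) * exp (M₁ - L₁) + (2 * κ - (m + 2)) * exp M₁) ≤
        -1 + 2 * (m + 1) * u x ^ m - (m + 2) * u x ^ (m + 1) * exp (M x - L x)
          - (2 * κ - (m + 2)) * exp (M x) := by
    have hux := hu x hx
    have hpow : 0 ≤ 2 * (m + 1) * u x ^ m := by positivity
    have hcross : (m + 2) * u x ^ (m + 1) * exp (M x - L x) ≤
        (m + 2) * u 0 ^ (m + 1) * exp (M₁ - L₁) := by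
      have hu₀ : 0 ≤ u 0 := hux.trans (h.u_le_u_zero hx)
      gcongr
      exacts [h.u_le_u_zero hx, hM x hx, hL x hx]
    have hself : (2 * κ - (m + 2)) * exp (M x) ≤ (2 * κ - (m + 2)) * exp M₁ :=
      mul_le_mul_of_nonneg_left (exp_le_exp.2 (hM x hx)) (sub_nonneg.2 hκ)
    linarith
  have := add_mul_le_of_le_hasDerivWithinAt h.hasDerivWithinAt_M le_deriv ht
  linarith

end IsLogSolution

theorem exists_isBounded_forall_logField_curve_mem (hκ : m + 2 ≤ 2 * κ) {z₀ : ℝ × ℝ × ℝ}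
    (hu₀ : 0 < z₀.1) (hE : exp z₀.2.1 + z₀.1 ^ (m + 1) < z₀.1) (T : ℝ) :
    ∃ S : Set (ℝ × ℝ × ℝ), Bornology.IsBounded S ∧ ∀ τ ∈ Icc 0 T, ∀ f : ℝ → ℝ × ℝ × ℝ,
      f 0 = z₀ → IsIntegralCurveOn f (fun _ ↦ logField m κ) (Icc 0 τ) → f τ ∈ S := by
  have hκ₀ : 0 ≤ κ := by linarith [(m.cast_nonneg : (0 : ℝ) ≤ m)]
  have : 0 ≤ 2 * κ - (m + 2) := sub_nonneg.2 hκ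
  let M₁ := z₀.2.2 + 2 * (m + 1) * z₀.1 ^ m * T
  let L₁ := z₀.2.1 - (1 + κ * exp M₁) * T
  let M₂ := z₀.2.2 - (1 + (m + 2) * z₀.1 ^ (m + 1) * exp (M₁ - L₁)
    + (2 * κ - (m + 2)) * exp M₁) * T
  refine ⟨Icc 0 z₀.1 ×ˢ Icc L₁ (log z₀.1) ×ˢ Icc M₂ M₁,
    (Metric.isBounded_Icc _ _).prod ((Metric.isBounded_Icc _ _).prod (Metric.isBounded_Icc _ _)),
    ?_⟩
  rintro τ hτ f rfl hf
  have h := isLogSolution_of_isIntegralCurveOn hf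
  have hu (x : ℝ) (hx : x ∈ Icc 0 τ) : 0 ≤ (f x).1 := (h.u_pos hκ₀ hu₀ hE hx).le
  have hM (x : ℝ) (hx : x ∈ Icc 0 τ) : (f x).2.2 ≤ M₁ := by
    refine (h.M_le_add_mul hκ hu hx).trans ?_
    simp only [M₁]
    gcongr
    exact hx.2.trans hτ.2
  have hL (x : ℝ) (hx : x ∈ Icc 0 τ) : L₁ ≤ (f x).2.1 := by
    refine le_trans ?_ (h.sub_mul_le_L hκ₀ hu hM hx)
    simp only [L₁]
    gcongr
    exact hx.2.trans hτ.2
  have hM₂ : M₂ ≤ (f τ).2.2 := by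
    refine le_trans ?_ (h.sub_mul_le_M hκ hu hM hL (right_mem_Icc.2 hτ.1))
    simp only [M₂]
    gcongr
    exact hτ.2
  have hmem : τ ∈ Icc 0 τ := right_mem_Icc.2 hτ.1
  exact ⟨⟨hu τ hmem, h.u_le_u_zero hmem⟩, ⟨hL τ hmem, h.L_le_log hκ₀ hu₀ hE hmem⟩, hM₂, hM τ hmem⟩

theorem exists_isLogSolution_Ici (hκ : m + 2 ≤ 2 * κ) {u₀ L₀ : ℝ} (M₀ : ℝ) (hu₀ : 0 < u₀)
    (hE : exp L₀ + u₀ ^ (m + 1) < u₀) :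
    ∃ u L M : ℝ → ℝ, u 0 = u₀ ∧ L 0 = L₀ ∧ M 0 = M₀ ∧ IsLogSolution m κ u L M (Ici 0) := by
  obtain ⟨f, hf₀, hf⟩ := exists_isIntegralCurveOn_Ici_of_isBounded (contDiff_logField m κ)
    (x₀ := (u₀, L₀, M₀))
    fun T _ ↦ exists_isBounded_forall_logField_curve_mem hκ hu₀ hE T
  exact ⟨_, _, _, by rw [hf₀], by rw [hf₀], by rw [hf₀], isLogSolution_of_isIntegralCurveOn hf⟩

end LogSystem

section ReducedSystem

/-- Positive solutions on `[0, ∞)` of the three-dimensional system to which `SystemODE` reduces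
under `w = c u ^ (m + 2)`, `b = c β`, `q = c u ^ (2 m + 2)`, `s = c u ^ (m + 1) v`, `t = c v²`,
where `m = r - 2`, `κ = r (r - 2) / (r - 1)` and `c` is any positive constant. -/
structure IsReducedSolution (m : ℕ) (κ : ℝ) (u v β : ℝ → ℝ) : Prop where
  u_pos : ∀ x, 0 ≤ x → 0 < u x
  v_pos : ∀ x, 0 ≤ x → 0 < v x
  β_pos : ∀ x, 0 ≤ x → 0 < β x
  hasDerivWithinAt_u : ∀ x, 0 ≤ x → HasDerivWithinAt u (-v x) (Ici 0) x
  hasDerivWithinAt_v : ∀ x, 0 ≤ x →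
    HasDerivWithinAt v (v x * (-1 + (m + 1) * u x ^ m - κ * v x ^ 2 / β x)) (Ici 0) x
  hasDerivWithinAt_β : ∀ x, 0 ≤ x →
    HasDerivWithinAt β (-β x + (m + 2) * u x ^ (m + 1) * v x - (m + 2) * v x ^ 2) (Ici 0) x

variable {m : ℕ} {κ : ℝ} {u v β : ℝ → ℝ} {x : ℝ}

theorem IsLogSolution.isReducedSolution {L M : ℝ → ℝ} (h : IsLogSolution m κ u L M (Ici 0))
    (hu : ∀ x, 0 ≤ x → 0 < u x) :
    IsReducedSolution m κ u (fun x ↦ Real.exp (L x)) fun x ↦ Real.exp (2 * L x - M x) where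
  u_pos := hu
  v_pos _ _ := Real.exp_pos _
  β_pos _ _ := Real.exp_pos _
  hasDerivWithinAt_u := h.hasDerivWithinAt_u
  hasDerivWithinAt_v x hx := by
    have hM : Real.exp (L x) ^ 2 / Real.exp (2 * L x - M x) = Real.exp (M x) := by
      rw [← Real.exp_nat_mul, ← Real.exp_sub]
      push_cast
      ring_nf
    rw [mul_div_assoc, hM]
    exact (h.hasDerivWithinAt_L x hx).exp
  hasDerivWithinAt_β x hx := by
    have hv : Real.exp (2 * L x - M x) * Real.exp (M x - L x) = Real.exp (L x) := by
      rw [← Real.exp_add]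
      ring_nf
    have hv_sq : Real.exp (2 * L x - M x) * Real.exp (M x) = Real.exp (L x) ^ 2 := by
      rw [← Real.exp_add, ← Real.exp_nat_mul]
      push_cast
      ring_nf
    refine (((h.hasDerivWithinAt_L x hx).const_mul 2).fun_sub
      (h.hasDerivWithinAt_M x hx)).exp.congr_deriv ?_
    linear_combination (m + 2) * u x ^ (m + 1) * hv - (m + 2) * hv_sq

theorem exists_isReducedSolution (hκ : m + 2 ≤ 2 * κ) {u₀ v₀ β₀ : ℝ} (hu₀ : 0 < u₀)
    (hv₀ : 0 < v₀) (hβ₀ : 0 < β₀) (hE : v₀ + u₀ ^ (m + 1) < u₀) :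
    ∃ u v β : ℝ → ℝ, u 0 = u₀ ∧ v 0 = v₀ ∧ β 0 = β₀ ∧ IsReducedSolution m κ u v β := by
  have hκ₀ : 0 ≤ κ := by linarith [(m.cast_nonneg : (0 : ℝ) ≤ m)]
  have hexpL₀ : Real.exp (Real.log v₀) = v₀ := Real.exp_log hv₀
  rw [← hexpL₀] at hE
  obtain ⟨u, L, M, rfl, hL₀, hM₀, h⟩ :=
    exists_isLogSolution_Ici hκ (2 * Real.log v₀ - Real.log β₀) hu₀ hE
  rw [← hL₀] at hE
  refine ⟨u, _, _, rfl, by simp only [hL₀, hexpL₀], ?_, h.isReducedSolution fun x hx ↦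
    (h.mono Icc_subset_Ici_self).u_pos hκ₀ hu₀ hE (right_mem_Icc.2 hx)⟩
  simp only [hL₀, hM₀, sub_sub_cancel, Real.exp_log hβ₀]

namespace IsReducedSolution

theorem hasDerivWithinAt_pow_mul (h : IsReducedSolution m κ u v β) (hx : 0 ≤ x) :
    HasDerivWithinAt (fun y ↦ u y ^ (m + 1) * v y)
      (u x ^ (m + 1) * v x * (-1 + (m + 1) * u x ^ m - (m + 1) * v x / u x
        - κ * v x ^ 2 / β x)) (Ici 0) x := by
  have hu : u x ≠ 0 := (h.u_pos x hx).ne'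
  refine (((h.hasDerivWithinAt_u x hx).fun_pow (m + 1)).fun_mul
    (h.hasDerivWithinAt_v x hx)).congr_deriv ?_
  push_cast [Nat.add_sub_cancel]
  field_simp
  ring

theorem hasDerivWithinAt_sq (h : IsReducedSolution m κ u v β) (hx : 0 ≤ x) :
    HasDerivWithinAt (fun y ↦ v y ^ 2)
      (2 * v x ^ 2 * (-1 + (m + 1) * u x ^ m - κ * v x ^ 2 / β x)) (Ici 0) x := by
  refine ((h.hasDerivWithinAt_v x hx).fun_pow 2).congr_deriv ?_
  push_cast
  ring

theorem systemODE {p₀ c : ℝ} (hc : c ≠ 0)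
    (h : IsReducedSolution m (m * (m + 2) / (m + 1)) u v β)
    (hw₀ : c * u 0 ^ (m + 2) = (1 - p₀) ^ (m + 3))
    (hb₀ : c * β 0 = (m + 2) * p₀ * (1 - p₀) ^ (m + 2))
    (hq₀ : c * u 0 ^ (2 * m + 2) = (1 - p₀) ^ (2 * m + 4))
    (hs₀ : c * (u 0 ^ (m + 1) * v 0) = (m + 1) * p₀ * (1 - p₀) ^ (2 * m + 3))
    (ht₀ : c * v 0 ^ 2 = (m + 1) ^ 2 * p₀ ^ 2 * (1 - p₀) ^ (2 * m + 2)) :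
    SystemODE (m + 2) p₀ (fun x ↦ c * u x ^ (m + 2)) (fun x ↦ c * β x)
      (fun x ↦ c * u x ^ (2 * m + 2)) (fun x ↦ c * (u x ^ (m + 1) * v x))
      (fun x ↦ c * v x ^ 2) := by
  unfold SystemODE
  push_cast
  simp only [show (m : ℝ) + 2 - 1 = m + 1 by ring, show (m : ℝ) + 2 - 2 = m by ring]
  refine ⟨fun x hx ↦ ?_, fun x hx ↦ ?_, fun x hx ↦ ?_, fun x hx ↦ ?_, fun x hx ↦ ?_,
    hw₀, hb₀, hq₀, hs₀, ht₀⟩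
  · refine (((h.hasDerivWithinAt_u x hx).fun_pow (m + 2)).const_mul c).congr_deriv ?_
    push_cast [Nat.add_succ_sub_one]
    ring
  · refine ((h.hasDerivWithinAt_β x hx).const_mul c).congr_deriv ?_
    ring
  · have hu := h.u_pos x hx
    refine (((h.hasDerivWithinAt_u x hx).fun_pow (2 * m + 2)).const_mul c).congr_deriv ?_
    push_cast [Nat.add_succ_sub_one]
    field_simp
    ring
  · have hu := h.u_pos x hx
    have hβ := h.β_pos x hx
    refine ((h.hasDerivWithinAt_pow_mul hx).const_mul c).congr_deriv ?_
    field_simp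
    ring
  · have hu := h.u_pos x hx
    have hβ := h.β_pos x hx
    refine ((h.hasDerivWithinAt_sq hx).const_mul c).congr_deriv ?_
    field_simp
    ring

-- The scale is forced: the constant of the motion `q ^ (m + 2) / w ^ (2 m + 2)` equals `c ^ (-m)`
-- after the substitution and `(1 - p₀) ^ 2` at time `0`, so `c = (e ^ 2)⁻¹` where `e ^ m = 1 - p₀`.
theorem systemODE_of_pow_eq {p₀ e : ℝ} (he : e ≠ 0) (hep : e ^ m = 1 - p₀)
    (h : IsReducedSolution m (m * (m + 2) / (m + 1)) u v β) (hu₀ : u 0 = e ^ (m + 1))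
    (hv₀ : v 0 = (m + 1) * p₀ * (1 - p₀) ^ m * e ^ (m + 1))
    (hβ₀ : β 0 = (m + 2) * p₀ * (1 - p₀) ^ (m + 2) * e ^ 2) :
    SystemODE (m + 2) p₀ (fun x ↦ (e ^ 2)⁻¹ * u x ^ (m + 2)) (fun x ↦ (e ^ 2)⁻¹ * β x)
      (fun x ↦ (e ^ 2)⁻¹ * u x ^ (2 * m + 2)) (fun x ↦ (e ^ 2)⁻¹ * (u x ^ (m + 1) * v x))
      (fun x ↦ (e ^ 2)⁻¹ * v x ^ 2) := by
  rw [← hep] at hv₀ hβ₀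
  apply h.systemODE (inv_ne_zero (pow_ne_zero 2 he)) <;>
    simp only [hu₀, hv₀, hβ₀, ← hep] <;> field_simp <;> ring

theorem lift_pos {c : ℝ} (hc : 0 < c) (h : IsReducedSolution m κ u v β) (hx : 0 ≤ x) :
    0 < c * u x ^ (m + 2) ∧ 0 < c * β x ∧ 0 < c * u x ^ (2 * m + 2) ∧
      0 < c * (u x ^ (m + 1) * v x) ∧ 0 < c * v x ^ 2 := by
  have hu := h.u_pos x hx
  have hv := h.v_pos x hx
  have hβ := h.β_pos x hx
  refine ⟨?_, ?_, ?_, ?_, ?_⟩ <;> positivity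

end IsReducedSolution

end ReducedSystem

theorem SystemODE.integrableOn_b {r : ℕ} {p₀ : ℝ} {w b q s t : ℝ → ℝ}
    (h : SystemODE r p₀ w b q s t) (hw : ∀ x, 0 ≤ x → 0 ≤ w x) (hb : ∀ x, 0 ≤ x → 0 ≤ b x)
    (ht : ∀ x, 0 ≤ x → 0 ≤ t x) : IntegrableOn b (Ioi 0) := by
  obtain ⟨hw', hb', -⟩ := h
  refine integrableOn_Ioi_of_le_hasDerivWithinAt (g := fun x ↦ -(w x + b x)) (C := 0)
    (fun x hx ↦ (hb' x hx).continuousWithinAt) hb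
    (fun x hx ↦ ((hw' x hx).fun_add (hb' x hx)).fun_neg) (fun x hx ↦ ?_) fun x hx ↦
      neg_nonpos.2 (add_nonneg (hw x hx) (hb x hx))
  have : 0 ≤ r * t x := mul_nonneg r.cast_nonneg (ht x hx)
  linarith

theorem initial_energy_neg {m : ℕ} (hm : m ≠ 0) {p e : ℝ} (hp : p ∈ Ioo 0 1) (he : 0 < e)
    (hep : e ^ m = 1 - p) :
    (m + 1) * p * (1 - p) ^ m * e ^ (m + 1) + (e ^ (m + 1)) ^ (m + 1) < e ^ (m + 1) :=
  calc
    (m + 1) * p * (1 - p) ^ m * e ^ (m + 1) + (e ^ (m + 1)) ^ (m + 1)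
      = e ^ (m + 1) * ((1 - p) ^ m * (1 + m * p)) := by
        have hpow : (e ^ (m + 1)) ^ (m + 1) = e ^ (m + 1) * ((1 - p) ^ m * (1 - p)) := by
          rw [← hep]
          ring
        rw [hpow]
        ring
    _ < e ^ (m + 1) :=
      mul_lt_of_lt_one_right (by positivity) (one_sub_pow_mul_one_add_mul_lt_one hm hp)

/-- The system of differential equations associated with `(r, p₀)` has
solutions defined on all of `[0,∞)` which are positive and with `∫₀^∞ b̂` finite. -/
theorem exists_global_positive_solution
    (r : ℕ) (hr : 3 ≤ r) (p₀ : ℝ) (hp₀ : p₀ ∈ Ioo (0 : ℝ) 1) :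
    ∃ w b q s t : ℝ → ℝ,
      SystemODE r p₀ w b q s t ∧
      (∀ x : ℝ, 0 ≤ x → 0 < w x ∧ 0 < b x ∧ 0 < q x ∧ 0 < s x ∧ 0 < t x) ∧
      IntegrableOn b (Ioi (0 : ℝ)) := by
  obtain ⟨m, rfl⟩ : ∃ m, r = m + 2 := ⟨r - 2, by omega⟩
  have hm : m ≠ 0 := by omega
  have hp_pos : 0 < p₀ := hp₀.1
  have hy : 0 < 1 - p₀ := sub_pos.2 hp₀.2
  obtain ⟨e, he, hep⟩ : ∃ e : ℝ, 0 < e ∧ e ^ m = 1 - p₀ :=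
    ⟨(1 - p₀) ^ (m : ℝ)⁻¹, by positivity, Real.rpow_inv_natCast_pow hy.le hm⟩
  have hκ : (m : ℝ) + 2 ≤ 2 * (m * (m + 2) / (m + 1)) := by
    have : (1 : ℝ) ≤ m := by exact_mod_cast Nat.one_le_iff_ne_zero.2 hm
    field_simp
    linarith
  obtain ⟨u, v, β, hu₀, hv₀, hβ₀, h⟩ := exists_isReducedSolution hκ (by positivity)
    (by positivity) (by positivity : 0 < (m + 2) * p₀ * (1 - p₀) ^ (m + 2) * e ^ 2)
    (initial_energy_neg hm hp₀ he hep)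
  have hsystem := h.systemODE_of_pow_eq he.ne' hep hu₀ hv₀ hβ₀
  have hpos (x : ℝ) (hx : 0 ≤ x) := h.lift_pos (inv_pos.2 (pow_pos he 2)) hx
  exact ⟨_, _, _, _, _, hsystem, hpos, hsystem.integrableOn_b (fun x hx ↦ (hpos x hx).1.le)
    (fun x hx ↦ (hpos x hx).2.1.le) fun x hx ↦ (hpos x hx).2.2.2.2.le⟩

end InducedForest
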